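/- arXiv:2112.13683 — 2 statements merged into one kernel-verified Lean document; each statement's English description precedes it below -/
import Mathlib

section
/- For all integers d ≥ 2 and 1 ≤ j ≤ d−1, Σ_{k=0}^{d−1} cot((2k+1)π/(2d))·cot((2k+2j+1)π/(2d)) = −d. -/
open Real

/-!
From `cot (b - a) = (cot a * cot b + 1) / (cot a - cot b)`, a product of two cotangents whose
arguments differ by a fixed `y` is `cot y` times a difference of cotangents, minus one. For
`y = j * (π / d)` the differences cancel when summed over `x, x + π / d, …, x + (d - 1) * (π / d)`,
since shifting by `π / d` permutes these angles modulo the period `π` of `cot`; only the `d`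
terms `-1` remain.
-/

lemma cot_periodic : Function.Periodic Real.cot π := fun x => by
  rw [Real.cot_eq_cos_div_sin, cos_add_pi, sin_add_pi, neg_div_neg_eq, Real.cot_eq_cos_div_sin]

lemma cot_sub_cot {a b : ℝ} (ha : sin a ≠ 0) (hb : sin b ≠ 0) :
    Real.cot a - Real.cot b = sin (b - a) / (sin a * sin b) := by
  rw [Real.cot_eq_cos_div_sin, Real.cot_eq_cos_div_sin, div_sub_div _ _ ha hb, sin_sub]
  ring

lemma cot_mul_cot_add_one {a b : ℝ} (ha : sin a ≠ 0) (hb : sin b ≠ 0) :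
    Real.cot a * Real.cot b + 1 = cos (b - a) / (sin a * sin b) := by
  rw [Real.cot_eq_cos_div_sin, Real.cot_eq_cos_div_sin, cos_sub]
  field_simp

lemma cot_mul_cot_add {a y : ℝ} (ha : sin a ≠ 0) (hay : sin (a + y) ≠ 0) (hy : sin y ≠ 0) :
    Real.cot a * Real.cot (a + y) = Real.cot y * (Real.cot a - Real.cot (a + y)) - 1 := by
  rw [eq_sub_iff_add_eq, cot_mul_cot_add_one ha hay, cot_sub_cot ha hay, add_sub_cancel_left,
    Real.cot_eq_cos_div_sin y, div_mul_div_cancel₀ hy]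

lemma sum_cot_mul_cot_add {ι : Type*} {s : Finset ι} {a : ι → ℝ} {y : ℝ}
    (ha : ∀ i ∈ s, sin (a i) ≠ 0) (hay : ∀ i ∈ s, sin (a i + y) ≠ 0) (hy : sin y ≠ 0) :
    ∑ i ∈ s, Real.cot (a i) * Real.cot (a i + y) =
      Real.cot y * (∑ i ∈ s, Real.cot (a i) - ∑ i ∈ s, Real.cot (a i + y)) - s.card := by
  rw [Finset.sum_congr rfl fun i hi => cot_mul_cot_add (ha i hi) (hay i hi) hy,
    Finset.sum_sub_distrib, ← Finset.mul_sum, Finset.sum_sub_distrib, Finset.sum_const, nsmul_one]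

lemma periodic_sum_range_add_nsmul {α β : Type*} [AddMonoid α] [AddCommMonoid β]
    {f : α → β} {c : α} {n : ℕ} (hf : Function.Periodic f (n • c)) :
    Function.Periodic (fun x => ∑ k ∈ Finset.range n, f (x + k • c)) c := by
  intro x
  have shift (k : ℕ) : x + c + k • c = x + (k + 1) • c := by rw [succ_nsmul', add_assoc]
  simp only [shift]
  cases n with
  | zero => rfl
  | succ m => rw [Finset.sum_range_succ, Finset.sum_range_succ', hf, zero_nsmul, add_zero]

lemma periodic_sum_range_cot {d : ℕ} (hd : d ≠ 0) :
    Function.Periodic (fun x => ∑ k ∈ Finset.range d, Real.cot (x + k * (π / d))) (π / d) := by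
  have cot_period : Function.Periodic Real.cot (d • (π / d)) := by
    rw [nsmul_eq_mul, mul_div_cancel₀ π (Nat.cast_ne_zero.mpr hd)]
    exact cot_periodic
  simpa only [nsmul_eq_mul] using periodic_sum_range_add_nsmul cot_period

lemma sin_add_int_mul_pi_div_ne_zero {d : ℕ} {x : ℝ} (hx : sin (d * x) ≠ 0) (k : ℤ) :
    sin (x + k * (π / d)) ≠ 0 := by
  have hd : (d : ℝ) ≠ 0 := fun h => hx (by rw [h, zero_mul, sin_zero])
  contrapose! hx
  obtain ⟨n, hn⟩ := sin_eq_zero_iff.mp hx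
  refine sin_eq_zero_iff.mpr ⟨d * n - k, ?_⟩
  rw [eq_sub_of_add_eq hn.symm]
  push_cast
  field_simp

lemma sin_int_mul_pi_div_ne_zero {d : ℕ} (hd : d ≠ 0) {j : ℤ} (hj : ¬ (d : ℤ) ∣ j) :
    sin (j * (π / d)) ≠ 0 := by
  contrapose! hj
  obtain ⟨n, hn⟩ := sin_eq_zero_iff.mp hj
  refine ⟨n, ?_⟩
  field_simp at hn
  rw [mul_comm]
  exact_mod_cast hn.symm

theorem stmt16_general {d : ℕ} {j : ℤ} {x : ℝ} (hx : sin (d * x) ≠ 0) (hj : ¬ (d : ℤ) ∣ j) :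
    ∑ k ∈ Finset.range d,
        Real.cot (x + k * (π / d)) * Real.cot (x + k * (π / d) + j * (π / d)) = -(d : ℝ) := by
  have hd : d ≠ 0 := by
    rintro rfl
    simp at hx
  have sin_angle (k : ℕ) : sin (x + k * (π / d)) ≠ 0 :=
    mod_cast sin_add_int_mul_pi_div_ne_zero hx k
  have sin_shifted_angle (k : ℕ) : sin (x + k * (π / d) + j * (π / d)) ≠ 0 := by
    rw [add_assoc, ← add_mul]
    exact mod_cast sin_add_int_mul_pi_div_ne_zero hx (k + j)
  have sum_shift : ∑ k ∈ Finset.range d, Real.cot (x + k * (π / d) + j * (π / d)) =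
      ∑ k ∈ Finset.range d, Real.cot (x + k * (π / d)) := by
    simpa only [add_right_comm x] using (periodic_sum_range_cot hd).int_mul j x
  rw [sum_cot_mul_cot_add (fun k _ => sin_angle k) (fun k _ => sin_shifted_angle k)
    (sin_int_mul_pi_div_ne_zero hd hj), sum_shift, sub_self, mul_zero, zero_sub, Finset.card_range]

/-- for all integers `d ≥ 2` and `1 ≤ j ≤ d-1`,
`Σ_{k=0}^{d-1} cot((2k+1)π/(2d))·cot((2k+2j+1)π/(2d)) = -d`. -/
theorem stmt16 (d j : ℕ) (hd : 2 ≤ d) (hj1 : 1 ≤ j) (hj2 : j ≤ d - 1) :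
    ∑ k ∈ Finset.range d,
        Real.cot ((2 * k + 1) * π / (2 * d)) * Real.cot ((2 * k + 2 * j + 1) * π / (2 * d)) =
      -(d : ℝ) := by
  have hd0 : (d : ℝ) ≠ 0 := by positivity
  have hx : sin (d * (π / (2 * d))) ≠ 0 := by
    rw [show d * (π / (2 * d)) = π / 2 by field_simp, sin_pi_div_two]
    exact one_ne_zero
  have hj : ¬ (d : ℤ) ∣ (j : ℤ) :=
    mod_cast Nat.not_dvd_of_pos_of_lt hj1 (by omega)
  rw [← stmt16_general hx hj]
  refine Finset.sum_congr rfl fun k _ => ?_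
  congr 2 <;> push_cast <;> field_simp <;> ring
end

section
/- For every even integer d ≥ 2, Σ_{k=0}^{d−1} (−1)^k·cot((2k+1)π/(2d)) = d. -/
open Real

/-!
For equally spaced angles `y k = x + k * π / d`, the sum of `cos (2 * j * y k)` over `k < d`
vanishes unless `d ∣ j`. Away from the zeros of `sin`, the function `sin (2 * m * y) * cot y` is the
cosine polynomial `1 + 2 * cos (2 * y) + ⋯ + 2 * cos (2 * (m - 1) * y) + cos (2 * m * y)`, so for
`0 < m < d` only its constant term contributes to the sum over the `y k`, which is therefore `d`.
When `d = 2 * m`, the factor `sin (2 * m * y k)` is `(-1) ^ k * sin (d * x)`, and `x = π / (2 * d)`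
makes `sin (d * x) = 1`.
-/

lemma sum_cos_two_mul_nat_mul_eq_zero {d j : ℕ} (hj : ¬ d ∣ j) (x : ℝ) :
    ∑ k ∈ Finset.range d, cos (2 * j * (x + k * π / d)) = 0 := by
  rcases eq_or_ne d 0 with rfl | hd
  · simp
  have arith_progression (k : ℕ) :
      2 * j * (x + k * π / d) = 2 * j * π / d * k + 2 * j * x := by
    ring
  have not_full_turns (n : ℤ) : 2 * j * π / d ≠ n * (2 * π) := by
    intro h
    have hjn : (j : ℝ) = d * n := by
      field_simp at h
      exact h
    exact hj (Int.natCast_dvd_natCast.1 ⟨n, by exact_mod_cast hjn⟩)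
  have half_total : d * (2 * j * π / d) / 2 = j * π := by field_simp
  simp only [arith_progression]
  rw [sum_cos d not_full_turns, half_total, sin_nat_mul_pi, zero_mul, zero_div]

lemma sin_two_mul_nat_mul_mul_cot_eq_sum_cos (m : ℕ) {y : ℝ} (hy : sin y ≠ 0) :
    sin (2 * m * y) * cot y =
      ∑ j ∈ Finset.range m, (cos (2 * j * y) + cos (2 * (j + 1 : ℕ) * y)) := by
  let f (j : ℕ) : ℝ := sin (2 * j * y) * cot y
  have increment (j : ℕ) : cos (2 * j * y) + cos (2 * (j + 1 : ℕ) * y) = f (j + 1) - f j := by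
    simp only [f]
    rw [← sub_mul, add_comm, sin_sub_sin, cos_add_cos, cot_eq_cos_div_sin]
    have half_difference : (2 * (j + 1 : ℕ) * y - 2 * j * y) / 2 = y := by
      push_cast
      ring
    rw [half_difference]
    field_simp
  rw [Finset.sum_congr rfl fun j _ ↦ increment j, Finset.sum_range_sub]
  simp [f]

lemma sin_nat_mul_add_nat_mul_pi_div {d : ℕ} (hd : d ≠ 0) (k : ℕ) (x : ℝ) :
    sin (d * (x + k * π / d)) = (-1) ^ k * sin (d * x) := by
  rw [← sin_add_nat_mul_pi]
  congr 1
  field_simp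

lemma sin_ne_zero_of_sin_nat_mul_ne_zero {d : ℕ} {y : ℝ} (h : sin (d * y) ≠ 0) : sin y ≠ 0 := by
  contrapose! h
  obtain ⟨n, rfl⟩ := sin_eq_zero_iff.1 h
  exact sin_eq_zero_iff.2 ⟨d * n, by push_cast; ring⟩

lemma sum_sin_two_mul_nat_mul_mul_cot {d m : ℕ} (hm : 0 < m) (hmd : m < d) {x : ℝ}
    (hx : ∀ k < d, sin (x + k * π / d) ≠ 0) :
    ∑ k ∈ Finset.range d, sin (2 * m * (x + k * π / d)) * cot (x + k * π / d) = d := by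
  let S (j : ℕ) : ℝ := ∑ k ∈ Finset.range d, cos (2 * j * (x + k * π / d))
  have S_zero : S 0 = d := by simp [S]
  have S_eq_zero {j : ℕ} (hj : 0 < j) (hjd : j < d) : S j = 0 :=
    sum_cos_two_mul_nat_mul_eq_zero (Nat.not_dvd_of_pos_of_lt hj hjd) x
  calc
    ∑ k ∈ Finset.range d, sin (2 * m * (x + k * π / d)) * cot (x + k * π / d)
        = ∑ j ∈ Finset.range m, (S j + S (j + 1)) := by
          simp only [S, ← Finset.sum_add_distrib]
          rw [Finset.sum_comm]
          exact Finset.sum_congr rfl fun k hk ↦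
            sin_two_mul_nat_mul_mul_cot_eq_sum_cos m (hx k (Finset.mem_range.1 hk))
    _ = ∑ j ∈ Finset.range m, S j := by
          refine Finset.sum_congr rfl fun j hj ↦ ?_
          have hjm := Finset.mem_range.1 hj
          rw [S_eq_zero j.succ_pos (by omega), add_zero]
    _ = S 0 := by
          refine Finset.sum_eq_single_of_mem 0 (Finset.mem_range.2 hm) fun j hj hj0 ↦ ?_
          exact S_eq_zero (Nat.pos_of_ne_zero hj0) ((Finset.mem_range.1 hj).trans hmd)
    _ = d := S_zero

theorem stmt18_general {d : ℕ} (heven : Even d) {x : ℝ} (hx : sin (d * x) ≠ 0) :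
    ∑ k ∈ Finset.range d, (-1 : ℝ) ^ k * cot (x + k * π / d) = d / sin (d * x) := by
  obtain ⟨m, hm⟩ := heven.two_dvd
  have hd : d ≠ 0 := by
    rintro rfl
    simp at hx
  have hdm : (d : ℝ) = 2 * m := by simp [hm]
  have hsin (k : ℕ) : sin (x + k * π / d) ≠ 0 := by
    apply sin_ne_zero_of_sin_nat_mul_ne_zero (d := d)
    rw [sin_nat_mul_add_nat_mul_pi_div hd]
    exact mul_ne_zero (pow_ne_zero k (by norm_num)) hx
  rw [eq_div_iff hx, Finset.sum_mul]
  calc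
    ∑ k ∈ Finset.range d, (-1 : ℝ) ^ k * cot (x + k * π / d) * sin (d * x)
        = ∑ k ∈ Finset.range d, sin (2 * m * (x + k * π / d)) * cot (x + k * π / d) := by
          refine Finset.sum_congr rfl fun k _ ↦ ?_
          rw [← hdm, sin_nat_mul_add_nat_mul_pi_div hd, mul_right_comm]
    _ = d := sum_sin_two_mul_nat_mul_mul_cot (by omega) (by omega) fun k _ ↦ hsin k

/-- for every even `d ≥ 2`, `Σ_{k=0}^{d-1} (-1)^k·cot((2k+1)π/(2d)) = d`. -/
theorem stmt18 (d : ℕ) (hd : 2 ≤ d) (heven : Even d) :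
    ∑ k ∈ Finset.range d, (-1 : ℝ) ^ k * Real.cot ((2 * k + 1) * π / (2 * d)) = (d : ℝ) := by
  have hsin : sin (d * (π / (2 * d))) = 1 := by
    rw [show d * (π / (2 * d)) = π / 2 by field_simp, sin_pi_div_two]
  convert stmt18_general heven (x := π / (2 * d)) (by simp [hsin]) using 4
  · field_simp
    ring
  · rw [hsin, div_one]
end
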